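/- Let A ∈ ℝ^{n×2}, and let C be an n×3 hard clustering matrix with nonempty clusters of sizes n₁, n₂, n₃ (n = n₁+n₂+n₃), cluster means ā₁, ā₂, ā₃ ∈ ℝ^{1×2}, and overall mean ā. Suppose M = Cᵀ[A | 1] is invertible with columns d₁, d₂, d₃ of D = M⁻¹. Then for any s, t ∈ ℝ and the point x = ā + s(ā − ā₃) + t(ā − ā₁): [x, 1] · d₂ = (1+s+t)/n, [x, 1] · d₁ = (1+s+t)/n − t/n₁, and [x, 1] · d₃ = (1+s+t)/n − s/n₃. Consequently, if s > 0 and t > 0, then [x,1]·d₂ > [x,1]·d₁ and [x,1]·d₂ > [x,1]·d₃, so x belongs to cluster 2 under the linear partition induced by D. -/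

import Mathlib

/-!
Row `c` of `Cᵀ[A | 1]` is `n_c [ā_c, 1]`, and these rows sum to `n [ā, 1]`. Since `x ↦ [x, 1]` is
affine, the point `x = ā + ∑ c, s_c (ā - ā_c)` has `[x, 1] = w Cᵀ[A | 1]` with
`w_c = (1 + ∑ b, s_b) / n - s_c / n_c`, so `w = [x, 1] D` for every right inverse `D` of
`Cᵀ[A | 1]`. The linear partition thus puts `x` in the cluster minimizing `s_c / n_c`; cluster 2 is
the case `(s₁, s₂, s₃) = (t, 0, s)`.
-/

open Matrix

section LinearPartition

open scoped BigOperators Finset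

variable {ι κ μ 𝕜 : Type*} [Fintype ι] [DecidableEq κ]

/-- The hard clustering matrix of the assignment `g` of points to clusters: its entry at `(i, c)`
is `1` if point `i` lies in cluster `c`, and `0` otherwise. -/
def clusterMatrix (𝕜 : Type*) [Zero 𝕜] [One 𝕜] (g : ι → κ) : Matrix ι κ 𝕜 :=
  of fun i c ↦ if g i = c then 1 else 0

theorem cluster_nonempty {g : ι → κ} (hg : g.Surjective) (c : κ) :
    ({i | g i = c} : Finset ι).Nonempty := by
  simpa only [Finset.filter_nonempty_iff, Finset.mem_univ, true_and] using hg c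

theorem transpose_clusterMatrix_mul_apply [NonAssocSemiring 𝕜] (g : ι → κ) (A : Matrix ι μ 𝕜)
    (c : κ) (j : μ) : ((clusterMatrix 𝕜 g)ᵀ * A) c j = ∑ i with g i = c, A i j := by
  simp [clusterMatrix, mul_apply, Finset.sum_filter]

/-- The homogeneous coordinates `[x, 1]` of the point `x`. -/
def homogenize [One 𝕜] {d : ℕ} (x : Fin d → 𝕜) : Fin (d + 1) → 𝕜 :=
  Fin.snoc x 1

variable [Fintype κ]

section Field

variable [Field 𝕜] [CharZero 𝕜]

/-- The point `ā + ∑ c, s c • (ā - ā_c)` reached from the mean `ā` of the rows of `A` by moving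
away from each cluster mean `ā_c` in proportion `s c`. -/
def shiftedMean (g : ι → κ) (s : κ → 𝕜) (A : Matrix ι μ 𝕜) : μ → 𝕜 :=
  fun j ↦ 𝔼 i, A i j + ∑ c, s c * (𝔼 i, A i j - 𝔼 i with g i = c, A i j)

theorem shiftedMean_homogenize [Nonempty ι] {d : ℕ} {g : ι → κ} (hg : g.Surjective) (s : κ → 𝕜)
    (A : Matrix ι (Fin d) 𝕜) :
    shiftedMean g s (of fun i ↦ homogenize (A i)) = homogenize (shiftedMean g s A) := by
  funext j
  cases j using Fin.lastCases with
  | last => simp [shiftedMean, homogenize, Finset.expect_const, cluster_nonempty hg]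
  | cast j => simp [shiftedMean, homogenize]

theorem shiftedMean_eq_vecMul (g : ι → κ) (s : κ → 𝕜) (A : Matrix ι μ 𝕜) :
    shiftedMean g s A =
      (fun c ↦ (1 + ∑ b, s b) / Fintype.card ι - s c / #{i | g i = c}) ᵥ*
        ((clusterMatrix 𝕜 g)ᵀ * A) := by
  funext j
  have total_eq_sum_clusters : ∑ i, A i j = ∑ c, ∑ i with g i = c, A i j :=
    (Finset.sum_fiberwise _ g _).symm
  calc shiftedMean g s A j
    _ = (1 + ∑ b, s b) * 𝔼 i, A i j - ∑ c, s c * 𝔼 i with g i = c, A i j := by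
      simp only [shiftedMean, mul_sub, Finset.sum_sub_distrib, ← Finset.sum_mul]
      ring
    _ = ∑ c, ((1 + ∑ b, s b) / Fintype.card ι - s c / #{i | g i = c}) *
          ∑ i with g i = c, A i j := by
      simp only [Finset.expect_eq_sum_div_card, Finset.card_univ, sub_mul, Finset.sum_sub_distrib,
        mul_div_assoc, div_mul_eq_mul_div, ← Finset.mul_sum, ← Finset.sum_div,
        ← total_eq_sum_clusters]
    _ = _ := by simp only [vecMul, dotProduct, transpose_clusterMatrix_mul_apply]

theorem homogenize_shiftedMean_vecMul {d : ℕ} (A : Matrix ι (Fin d) 𝕜) {g : ι → κ}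
    (hg : g.Surjective) {D : Matrix (Fin (d + 1)) κ 𝕜}
    (hD : (clusterMatrix 𝕜 g)ᵀ * (of fun i ↦ homogenize (A i)) * D = 1) (s : κ → 𝕜) (c : κ) :
    (homogenize (shiftedMean g s A) ᵥ* D) c =
      (1 + ∑ b, s b) / Fintype.card ι - s c / #{i | g i = c} := by
  have : Nonempty ι := (hg c).nonempty
  rw [← shiftedMean_homogenize hg, shiftedMean_eq_vecMul, vecMul_vecMul, hD, vecMul_one]

end Field

theorem partition_region_cluster_two_general [Field 𝕜] [LinearOrder 𝕜] [IsStrictOrderedRing 𝕜]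
    {d : ℕ} (A : Matrix ι (Fin d) 𝕜) {g : ι → κ} (hg : g.Surjective)
    {D : Matrix (Fin (d + 1)) κ 𝕜}
    (hD : (clusterMatrix 𝕜 g)ᵀ * (of fun i ↦ homogenize (A i)) * D = 1) (s : κ → 𝕜) :
    (∀ c, (homogenize (shiftedMean g s A) ᵥ* D) c =
      (1 + ∑ b, s b) / Fintype.card ι - s c / #{i | g i = c}) ∧
    ∀ b c, (homogenize (shiftedMean g s A) ᵥ* D) c < (homogenize (shiftedMean g s A) ᵥ* D) b ↔
      s b / #{i | g i = b} < s c / #{i | g i = c} := by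
  have score := homogenize_shiftedMean_vecMul A hg hD s
  exact ⟨score, fun b c ↦ by rw [score, score, sub_lt_sub_iff_left]⟩

end LinearPartition

/-- For `A ∈ ℝ^{n×2}`, a hard clustering into 3 nonempty clusters with
sizes `nc`, cluster means `ā₁, ā₃`, overall mean `ā`, and `M = Cᵀ[A|1]` invertible with
inverse columns `d₁, d₂, d₃`: for `x = ā + s(ā − ā₃) + t(ā − ā₁)`,
`[x,1]·d₂ = (1+s+t)/n`, `[x,1]·d₁ = (1+s+t)/n − t/n₁`, `[x,1]·d₃ = (1+s+t)/n − s/n₃`;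
hence if `s > 0` and `t > 0` then `x` belongs to cluster 2. -/
theorem partition_region_cluster_two (n : ℕ) (A : Matrix (Fin n) (Fin 2) ℝ)
    (g : Fin n → Fin 3) (hnonempty : ∀ c, ∃ i, g i = c)
    (C : Matrix (Fin n) (Fin 3) ℝ)
    (hC : C = fun i c => if g i = c then 1 else 0)
    (augA : Matrix (Fin n) (Fin 3) ℝ)
    (haug : augA = fun i (j : Fin 3) => if h : (j : ℕ) < 2 then A i ⟨j, h⟩ else 1)
    (M : Matrix (Fin 3) (Fin 3) ℝ) (hM : M = Cᵀ * augA) (hMinv : IsUnit M)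
    (nc : Fin 3 → ℕ) (hnc : ∀ c, nc c = (Finset.univ.filter fun i => g i = c).card)
    (abar : Fin 2 → ℝ) (habar : ∀ j, abar j = (∑ i, A i j) / n)
    (abar1 abar3 : Fin 2 → ℝ)
    (habar1 : ∀ j, abar1 j = (∑ i ∈ Finset.univ.filter fun i => g i = 0, A i j) / nc 0)
    (habar3 : ∀ j, abar3 j = (∑ i ∈ Finset.univ.filter fun i => g i = 2, A i j) / nc 2)
    (s t : ℝ) (x : Fin 2 → ℝ)
    (hx : x = fun j => abar j + s * (abar j - abar3 j) + t * (abar j - abar1 j))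
    (ext : Fin 3 → ℝ)
    (hext : ext = fun (j : Fin 3) => if h : (j : ℕ) < 2 then x ⟨j, h⟩ else 1) :
    (∑ r, ext r * M⁻¹ r 1 = (1 + s + t) / n) ∧
    (∑ r, ext r * M⁻¹ r 0 = (1 + s + t) / n - t / nc 0) ∧
    (∑ r, ext r * M⁻¹ r 2 = (1 + s + t) / n - s / nc 2) ∧
    (0 < s → 0 < t →
      (∑ r, ext r * M⁻¹ r 0 < ∑ r, ext r * M⁻¹ r 1) ∧
      (∑ r, ext r * M⁻¹ r 2 < ∑ r, ext r * M⁻¹ r 1)) := by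
  have nc_pos (c : Fin 3) : (0 : ℝ) < nc c := by
    rw [hnc]
    exact_mod_cast (cluster_nonempty hnonempty c).card_pos
  have x_eq : x = shiftedMean g ![t, 0, s] A := by
    funext j
    simp only [hx, shiftedMean, habar, habar1, habar3, hnc, Finset.expect_eq_sum_div_card,
      Finset.card_univ, Fintype.card_fin, Fin.sum_univ_three, cons_val]
    ring
  have ext_eq : ext = homogenize (shiftedMean g ![t, 0, s] A) := by rw [hext, x_eq]; rfl
  have M_eq : M = (clusterMatrix ℝ g)ᵀ * of fun i ↦ homogenize (A i) := by rw [hM, hC, haug]; rfl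
  have right_inv : M * M⁻¹ = 1 := mul_nonsing_inv M ((isUnit_iff_isUnit_det M).mp hMinv)
  obtain ⟨score, score_lt⟩ :=
    partition_region_cluster_two_general A hnonempty (M_eq ▸ right_inv) ![t, 0, s]
  have sum_shifts : 1 + ∑ b, ![t, 0, s] b = 1 + s + t := by simp [Fin.sum_univ_three]; ring
  simp only [← M_eq, ← ext_eq, ← hnc, Fintype.card_fin, sum_shifts] at score score_lt
  refine ⟨(score 1).trans (by simp), score 0, score 2, fun hs ht ↦
    ⟨(score_lt 1 0).mpr ?_, (score_lt 1 2).mpr ?_⟩⟩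
  · simpa using div_pos ht (nc_pos 0)
  · simpa using div_pos hs (nc_pos 2)
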